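/- Let N = (P,T,F,Var) be a UDPN and i, f ℚ⁺-markings. Then f is ℚ⁺-reachable from i if and only if there exist ℚ⁺-markings i', f' and a ℚ-run σ' such that: (1) i' is ℚ⁺-reachable from i; (2) i' →σ'_ℚ f'; (3) f is ℚ⁺-reachable from f'; (4) i'(p,α) > 0 for every (p,α) ∈ Pre(σ'); and (5) f'(p,α) > 0 for every (p,α) ∈ Post(σ'). -/

import Mathlib

/-!
For sufficiency, split `σ'` into `n` equal fractions, that is, repeat `n` times the run `σ'` with
all its coefficients divided by `n`. The marking before each repetition lies on the segment from
`i'` to `f'`, and the repetition is fireable as soon as this marking dominates the total consumption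
of `σ'` divided by `n`. An entry consumed from is positive in `i'`; if it is also positive in `f'`,
then it is bounded away from `0` on the whole segment and every large `n` suffices. If it vanishes
in `f'`, then `σ'` produces nothing there, so it consumes exactly the amount present in `i'` and
every `n` works. Only finitely many entries are consumed from, so one `n` serves them all. For
necessity, take `σ'` empty.
-/

open Finset

noncomputable section
open scoped Classical

/-- An unordered data Petri net over places `P`, transitions `T`, variables `V`,
with countably infinite data domain `D = ℕ`.
`pre p t` is the function `F(p,t) : V → ℕ` and `post t p` is `F(t,p) : V → ℕ`. -/
structure UDPN (P T V : Type) where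
  pre : P → T → V → ℕ
  post : T → P → V → ℕ

/-- An X-step `(c, t, π)`: coefficient, transition and mode. -/
structure Step (T V : Type) where
  c : ℚ
  t : T
  π : V → ℕ

variable {P T V : Type} [Fintype P] [Fintype T] [Fintype V]

/-- The `P × V` rational matrix `F(•,t)`. -/
def preMat (N : UDPN P T V) (t : T) (p : P) (x : V) : ℚ := (N.pre p t x : ℚ)

/-- The displacement `Δ(t) = F(t,•) − F(•,t)` as a `P × V` rational matrix. -/
def delta (N : UDPN P T V) (t : T) (p : P) (x : V) : ℚ :=
  (N.post t p x : ℚ) - (N.pre p t x : ℚ)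

/-- `A ∘ π⁻¹`: the `P × ℕ` matrix with `(A∘π⁻¹)(p,α) = A(p,x)` if `α = π x`,
and `0` if `α` is outside the range of `π`. (For injective `π` the sum has at
most one nonzero summand.) -/
def compInv (A : P → V → ℚ) (π : V → ℕ) (p : P) (α : ℕ) : ℚ :=
  ∑ x : V, if π x = α then A p x else 0

/-- Only finitely many nonzero columns. -/
def FinCols (m : P → ℕ → ℚ) : Prop := {α : ℕ | ∃ p, m p α ≠ 0}.Finite

/-- `IsMarking pos m`: `m` is an X-marking; `pos = true` corresponds to `X = ℚ⁺`
(all entries nonnegative), `pos = false` to `X = ℚ`. -/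
def IsMarking (pos : Bool) (m : P → ℕ → ℚ) : Prop :=
  FinCols m ∧ (pos = true → ∀ p α, 0 ≤ m p α)

/-- Data values of a marking. -/
def dvalM (m : P → ℕ → ℚ) : Set ℕ := {α | ∃ p, m p α ≠ 0}

/-- A valid X-step: nonnegative coefficient and injective mode.  -/
def IsStep (s : Step T V) : Prop := 0 ≤ s.c ∧ Function.Injective s.π

/-- A valid X-run: a finite sequence of X-steps. -/
def IsRun (ρ : List (Step T V)) : Prop := ∀ s ∈ ρ, IsStep s

/-- The effect `c · (Δ(t) ∘ π⁻¹)` of a step. -/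
def stepEffect (N : UDPN P T V) (s : Step T V) (p : P) (α : ℕ) : ℚ :=
  s.c * compInv (delta N s.t) s.π p α

/-- The effect `Δ(ρ)` of a run. -/
def runEffect (N : UDPN P T V) (ρ : List (Step T V)) (p : P) (α : ℕ) : ℚ :=
  (ρ.map fun s => stepEffect N s p α).sum

/-- A step `(c,t,π)` is fireable at `m` if `m − c·(F(•,t)∘π⁻¹)` is again an
X-marking: finitely many nonzero columns and (when `pos`) nonnegative entries. -/
def stepFireable (pos : Bool) (N : UDPN P T V) (m : P → ℕ → ℚ) (s : Step T V) : Prop :=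
  FinCols (fun p α => m p α - s.c * compInv (preMat N s.t) s.π p α) ∧
  (pos = true → ∀ p α, 0 ≤ m p α - s.c * compInv (preMat N s.t) s.π p α)

/-- A run is fireable at `m` if each step is fireable at the corresponding
intermediate marking. -/
def runFireable (pos : Bool) (N : UDPN P T V) : (P → ℕ → ℚ) → List (Step T V) → Prop
  | _, [] => True
  | m, s :: ρ => stepFireable pos N m s ∧
      runFireable pos N (fun p α => m p α + stepEffect N s p α) ρ

/-- `m →ρ_X m'` : `ρ` is fireable at `m` and `m' = m + Δ(ρ)`. -/
def Reaches (pos : Bool) (N : UDPN P T V) (i : P → ℕ → ℚ) (ρ : List (Step T V))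
    (f : P → ℕ → ℚ) : Prop :=
  runFireable pos N i ρ ∧ f = fun p α => i p α + runEffect N ρ p α

/-- `f` is X-reachable from `i`. -/
def Reach (pos : Bool) (N : UDPN P T V) (i f : P → ℕ → ℚ) : Prop :=
  ∃ ρ, IsRun ρ ∧ Reaches pos N i ρ f

/-- `vars(t)`. -/
def varsOf (N : UDPN P T V) (t : T) : Set V :=
  {x | ∃ p, N.pre p t x ≠ 0 ∨ N.post t p x ≠ 0}

/-- `maxvars(N) = max_{t ∈ T} |vars(t)|` (0 if `T` is empty). -/
def maxvars (N : UDPN P T V) : ℕ :=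
  Finset.univ.sup fun t : T => (varsOf N t).ncard

/-- `dval(ρ)`: the data values used by a run. -/
def runDval (N : UDPN P T V) (ρ : List (Step T V)) : Set ℕ :=
  {α | ∃ s ∈ ρ, ∃ x ∈ varsOf N s.t, s.π x = α}
/-- For `α ∈ E`: the least element of `{β ∈ E | β > α}` if nonempty, else `min E`. -/
def nextE (E : Finset ℕ) (α : ℕ) : ℕ :=
  if h : (E.filter fun β => α < β).Nonempty then (E.filter fun β => α < β).min' h
  else if h' : E.Nonempty then E.min' h' else 0

/-- The inverse of `nextE` on `E`: the greatest element of `{γ ∈ E | γ < β}` if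
nonempty, else `max E`. -/
def prevE (E : Finset ℕ) (β : ℕ) : ℕ :=
  if h : (E.filter fun γ => γ < β).Nonempty then (E.filter fun γ => γ < β).max' h
  else if h' : E.Nonempty then E.max' h' else 0

/-- The mode `π'` of `rot(E,ω)`, characterized by: the permutation matrix `P'` of
`π'` satisfies `P'(•,α) = P(•,α)` for `α ∉ E` and `P'(•,α) = P(•, nextE α)` for
`α ∈ E` (i.e. `π' x = α ↔ π x = nextE α` for `α ∈ E`). -/
def rotMode {V : Type} (E : Finset ℕ) (π : V → ℕ) (x : V) : ℕ :=
  if π x ∈ E then prevE E (π x) else π x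

/-- `rot(E,ω)`. -/
def rotStep (E : Finset ℕ) (s : Step T V) : Step T V := ⟨s.c, s.t, rotMode E s.π⟩

/-- The uniformization `U(E,ω)`: the concatenation
`rot^0(E, ω/|E|) ⋯ rot^{|E|−1}(E, ω/|E|)`. -/
def uniformize (E : Finset ℕ) (s : Step T V) : List (Step T V) :=
  (List.range E.card).map fun k => (rotStep E)^[k] ⟨s.c / (E.card : ℚ), s.t, s.π⟩

/-- Column `α` of `Δ(t)·P_π` is zero. -/
def zeroCol (N : UDPN P T V) (s : Step T V) (α : ℕ) : Prop :=
  ∀ p, compInv (delta N s.t) s.π p α = 0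

/-- The transposition of the data values `α` and `β`. -/
def swapVal (α β γ : ℕ) : ℕ := if γ = α then β else if γ = β then α else γ

/-- `R(α,E,ω)`: if column `α` of `Δ(t)·P_π` is zero then `ω` itself; otherwise the
step whose permutation matrix is obtained from `P_π` by exchanging columns `α` and
`β`, where `β` is the least datum in `E` whose column of `Δ(t)·P_π` is zero. -/
def replaceStep (N : UDPN P T V) (α : ℕ) (E : Finset ℕ) (s : Step T V) : Step T V :=
  if zeroCol N s α then s
  else if h : (E.filter fun β => zeroCol N s β).Nonempty then
    ⟨s.c, s.t, fun x => swapVal α ((E.filter fun β => zeroCol N s β).min' h) (s.π x)⟩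
  else s

/-- `dec(E,α,σ)`: the concatenation `U(E,R(α,E,σ(1))) ⋯ U(E,R(α,E,σ(n)))`. -/
def decRun (N : UDPN P T V) (α : ℕ) (E : Finset ℕ) (σ : List (Step T V)) :
    List (Step T V) :=
  σ.flatMap fun s => uniformize E (replaceStep N α E s)

/-- A histogram of order `q`: a `V × ℕ` matrix with nonnegative rational entries
and finitely many nonzero columns, every row summing to `q` and every column
summing to at most `q`. -/
def IsHistogram (H : V → ℕ → ℚ) (q : ℚ) : Prop :=
  0 ≤ q ∧ (∀ x α, 0 ≤ H x α) ∧ ({α | ∃ x, H x α ≠ 0}).Finite ∧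
  (∀ x, ∑ᶠ α, H x α = q) ∧ (∀ α, ∑ x : V, H x α ≤ q)

/-- `col(H)`: the nonzero columns of `H`. -/
def colH (H : V → ℕ → ℚ) : Set ℕ := {α | ∃ x, H x α ≠ 0}

/-- The permutation matrix `P_π` of a mode `π`. -/
def permMat {V : Type} (π : V → ℕ) (x : V) (α : ℕ) : ℚ := if π x = α then 1 else 0

/-- `Pre(ρ)`: pairs `(p,α)` of tokens consumed by the run `ρ`. -/
def preSet (N : UDPN P T V) (ρ : List (Step T V)) : Set (P × ℕ) :=
  {pa | ∃ s ∈ ρ, ∃ x, 0 < N.pre pa.1 s.t x ∧ s.π x = pa.2}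

/-- `Post(ρ)`: pairs `(p,α)` of tokens produced by the run `ρ`. -/
def postSet (N : UDPN P T V) (ρ : List (Step T V)) : Set (P × ℕ) :=
  {pa | ∃ s ∈ ρ, ∃ x, 0 < N.post s.t pa.1 x ∧ s.π x = pa.2}

/-- A loop-less UDPN: `PrePlace(t) ∩ PostPlace(t) = ∅` for every transition. -/
def IsLoopless (N : UDPN P T V) : Prop :=
  ∀ t : T, ¬ ∃ p : P, (∃ x, 0 < N.pre p t x) ∧ (∃ x, 0 < N.post t p x)

section OrderedField

variable {K : Type*} [Field K] [LinearOrder K] [IsStrictOrderedRing K] {a d : K}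

theorem min_le_add_mul {t : K} (ht₀ : 0 ≤ t) (ht₁ : t ≤ 1) : min a (a + d) ≤ a + t * d := by
  rcases le_total 0 d with hd | hd
  · exact min_le_of_left_le (le_add_of_nonneg_right (mul_nonneg ht₀ hd))
  · exact min_le_of_right_le (by gcongr; exact le_mul_of_le_one_left hd ht₁)

theorem min_le_add_natCast_div_mul {k n : ℕ} (hkn : k ≤ n) :
    min a (a + d) ≤ a + k / n * d :=
  min_le_add_mul (by positivity) (div_le_one_of_le₀ (Nat.cast_le.2 hkn) (Nat.cast_nonneg n))

theorem eventually_div_natCast_le [Archimedean K] (c : K) {b : K} (hb : 0 < b) :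
    ∀ᶠ n : ℕ in Filter.atTop, c / n ≤ b := by
  filter_upwards [tendsto_natCast_atTop_atTop.eventually_ge_atTop (c / b),
    Filter.eventually_gt_atTop 0] with n hcb hn
  exact (div_le_comm₀ hb (Nat.cast_pos.2 hn)).1 hcb

theorem div_natCast_le_add_mul_neg (ha : 0 ≤ a) {k n : ℕ} (hkn : k < n) :
    a / n ≤ a + k / n * -a := by
  have hn : (0 : K) < n := Nat.cast_pos.2 (Nat.zero_lt_of_lt hkn)
  have hk : (1 : K) ≤ n - k := by
    rw [le_sub_iff_add_le']
    exact_mod_cast hkn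
  calc a / n ≤ (n - k) * a / n := by gcongr; exact le_mul_of_one_le_left ha hk
    _ = a + k / n * -a := by field_simp; ring

end OrderedField

section Runs

omit [Fintype P] [Fintype T]

/-- The matrix `F(t,•)`, the counterpart of `preMat`. -/
def postMat (N : UDPN P T V) (t : T) (p : P) (x : V) : ℚ := (N.post t p x : ℚ)

/-- The matrix `c · (A(t) ∘ π⁻¹)` that a step `(c,t,π)` moves when transitions carry the weights
`A`: its consumption, production or effect for `A = preMat N`, `postMat N` or `delta N`. -/
def stepFlow (A : T → P → V → ℚ) (s : Step T V) : P → ℕ → ℚ :=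
  s.c • compInv (A s.t) s.π

/-- The total amount moved by a run when transitions carry the weights `A`; see `stepFlow`. -/
def runFlow (A : T → P → V → ℚ) (ρ : List (Step T V)) : P → ℕ → ℚ :=
  (ρ.map (stepFlow A)).sum

/-- The run `r · ρ`: every coefficient of `ρ` is multiplied by `r`. -/
def scaleRun (r : ℚ) (ρ : List (Step T V)) : List (Step T V) :=
  ρ.map fun s => ⟨r * s.c, s.t, s.π⟩

section

omit [Fintype V]

theorem preMat_nonneg (N : UDPN P T V) : 0 ≤ preMat N := fun _ _ _ => Nat.cast_nonneg _

theorem postMat_nonneg (N : UDPN P T V) : 0 ≤ postMat N := fun _ _ _ => Nat.cast_nonneg _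

theorem IsRun.append {ρ τ : List (Step T V)} (hρ : IsRun ρ) (hτ : IsRun τ) : IsRun (ρ ++ τ) :=
  fun s hs => (List.mem_append.1 hs).elim (hρ s) (hτ s)

theorem IsRun.scaleRun {ρ : List (Step T V)} (hρ : IsRun ρ) {r : ℚ} (hr : 0 ≤ r) :
    IsRun (scaleRun r ρ) :=
  List.forall_mem_map.2 fun s hs => ⟨mul_nonneg hr (hρ s hs).1, (hρ s hs).2⟩

theorem FinCols.add {m k : P → ℕ → ℚ} (hm : FinCols m) (hk : FinCols k) : FinCols (m + k) := by
  refine (hm.union hk).subset ?_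
  rintro α ⟨p, hp⟩
  by_cases hmp : m p α = 0
  · exact Or.inr ⟨p, by simpa [hmp] using hp⟩
  · exact Or.inl ⟨p, hmp⟩

theorem FinCols.smul {m : P → ℕ → ℚ} (hm : FinCols m) (c : ℚ) : FinCols (c • m) :=
  hm.subset fun _ ⟨p, hp⟩ => ⟨p, right_ne_zero_of_mul hp⟩

theorem FinCols.sub {m k : P → ℕ → ℚ} (hm : FinCols m) (hk : FinCols k) : FinCols (m - k) := by
  simpa [sub_eq_add_neg] using hm.add (hk.smul (-1))

theorem finite_preSet [Finite P] [Finite V] (N : UDPN P T V) (ρ : List (Step T V)) :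
    (preSet N ρ).Finite := by
  have hdata : (⋃ s ∈ {s | s ∈ ρ}, Set.range s.π).Finite :=
    ρ.finite_toSet.biUnion fun s _ => Set.finite_range s.π
  refine (Set.finite_univ.prod hdata).subset ?_
  rintro ⟨p, α⟩ ⟨s, hs, x, -, hx⟩
  exact ⟨trivial, Set.mem_biUnion hs ⟨x, hx⟩⟩

end

theorem compInv_sub (A B : P → V → ℚ) (π : V → ℕ) :
    compInv (A - B) π = compInv A π - compInv B π := by
  funext p α
  simp only [compInv, Pi.sub_apply, ← Finset.sum_sub_distrib]
  exact Finset.sum_congr rfl fun x _ => by split_ifs <;> simp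

theorem compInv_nonneg {A : P → V → ℚ} (hA : 0 ≤ A) (π : V → ℕ) : 0 ≤ compInv A π :=
  fun p _ => Finset.sum_nonneg fun x _ => ite_nonneg (hA p x) le_rfl

theorem exists_of_compInv_ne_zero {A : P → V → ℚ} {π : V → ℕ} {p : P} {α : ℕ}
    (h : compInv A π p α ≠ 0) : ∃ x, π x = α ∧ A p x ≠ 0 := by
  obtain ⟨x, -, hx⟩ := Finset.exists_ne_zero_of_sum_ne_zero h
  exact ⟨x, ite_ne_right_iff.1 hx⟩

theorem finCols_compInv (A : P → V → ℚ) (π : V → ℕ) : FinCols (compInv A π) := by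
  refine (Set.finite_range π).subset ?_
  rintro α ⟨p, hp⟩
  obtain ⟨x, hx, -⟩ := exists_of_compInv_ne_zero hp
  exact ⟨x, hx⟩

theorem stepFlow_nonneg {A : T → P → V → ℚ} (hA : 0 ≤ A) {s : Step T V} (hs : IsStep s) :
    0 ≤ stepFlow A s :=
  smul_nonneg hs.1 (compInv_nonneg (hA s.t) s.π)

theorem finCols_stepFlow (A : T → P → V → ℚ) (s : Step T V) : FinCols (stepFlow A s) :=
  (finCols_compInv (A s.t) s.π).smul s.c

theorem stepFlow_sub (A B : T → P → V → ℚ) (s : Step T V) :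
    stepFlow (A - B) s = stepFlow A s - stepFlow B s := by
  rw [stepFlow, Pi.sub_apply, compInv_sub, smul_sub, stepFlow, stepFlow]

@[simp]
theorem runFlow_nil (A : T → P → V → ℚ) : runFlow A [] = 0 := rfl

@[simp]
theorem runFlow_cons (A : T → P → V → ℚ) (s : Step T V) (ρ : List (Step T V)) :
    runFlow A (s :: ρ) = stepFlow A s + runFlow A ρ :=
  List.sum_cons

theorem runFlow_append (A : T → P → V → ℚ) (ρ τ : List (Step T V)) :
    runFlow A (ρ ++ τ) = runFlow A ρ + runFlow A τ := by
  simp [runFlow]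

theorem runFlow_sub (A B : T → P → V → ℚ) (ρ : List (Step T V)) :
    runFlow (A - B) ρ = runFlow A ρ - runFlow B ρ := by
  induction ρ with
  | nil => simp
  | cons s ρ ih => rw [runFlow_cons, runFlow_cons, runFlow_cons, stepFlow_sub, ih,
      add_sub_add_comm]

theorem runFlow_scaleRun (A : T → P → V → ℚ) (r : ℚ) (ρ : List (Step T V)) :
    runFlow A (scaleRun r ρ) = r • runFlow A ρ := by
  simp [runFlow, scaleRun, stepFlow, List.smul_sum, Function.comp_def, mul_smul]

theorem runFlow_nonneg {A : T → P → V → ℚ} (hA : 0 ≤ A) {ρ : List (Step T V)} (hρ : IsRun ρ) :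
    0 ≤ runFlow A ρ :=
  List.sum_nonneg (List.forall_mem_map.2 fun s hs => stepFlow_nonneg hA (hρ s hs))

theorem finCols_runFlow (A : T → P → V → ℚ) (ρ : List (Step T V)) : FinCols (runFlow A ρ) := by
  induction ρ with
  | nil => simp [FinCols]
  | cons s ρ ih => exact (runFlow_cons A s ρ).symm ▸ (finCols_stepFlow A s).add ih

theorem exists_of_runFlow_ne_zero {A : T → P → V → ℚ} {ρ : List (Step T V)} {p : P} {α : ℕ}
    (h : runFlow A ρ p α ≠ 0) : ∃ s ∈ ρ, ∃ x, s.π x = α ∧ A s.t p x ≠ 0 := by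
  induction ρ with
  | nil => exact absurd rfl h
  | cons s ρ ih =>
    by_cases hρ : runFlow A ρ p α = 0
    · have hs : stepFlow A s p α ≠ 0 := by simpa [hρ] using h
      exact ⟨s, List.mem_cons_self, exists_of_compInv_ne_zero (right_ne_zero_of_mul hs)⟩
    · obtain ⟨s', hs', hx⟩ := ih hρ
      exact ⟨s', List.mem_cons_of_mem s hs', hx⟩

theorem mem_preSet_of_runFlow_ne_zero {N : UDPN P T V} {ρ : List (Step T V)} {p : P} {α : ℕ}
    (h : runFlow (preMat N) ρ p α ≠ 0) : (p, α) ∈ preSet N ρ := by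
  obtain ⟨s, hs, x, hx, hpre⟩ := exists_of_runFlow_ne_zero h
  exact ⟨s, hs, x, Nat.pos_of_ne_zero (Nat.cast_ne_zero.1 hpre), hx⟩

theorem mem_postSet_of_runFlow_ne_zero {N : UDPN P T V} {ρ : List (Step T V)} {p : P} {α : ℕ}
    (h : runFlow (postMat N) ρ p α ≠ 0) : (p, α) ∈ postSet N ρ := by
  obtain ⟨s, hs, x, hx, hpost⟩ := exists_of_runFlow_ne_zero h
  exact ⟨s, hs, x, Nat.pos_of_ne_zero (Nat.cast_ne_zero.1 hpost), hx⟩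

theorem stepEffect_eq_sub (N : UDPN P T V) (s : Step T V) :
    stepEffect N s = stepFlow (postMat N) s - stepFlow (preMat N) s :=
  stepFlow_sub (postMat N) (preMat N) s

theorem runEffect_eq_runFlow (N : UDPN P T V) (ρ : List (Step T V)) :
    runEffect N ρ = runFlow (delta N) ρ := by
  funext p α
  induction ρ with
  | nil => rfl
  | cons s ρ ih => exact congrArg (stepEffect N s p α + ·) ih

theorem runEffect_eq_sub (N : UDPN P T V) (ρ : List (Step T V)) :
    runEffect N ρ = runFlow (postMat N) ρ - runFlow (preMat N) ρ :=
  (runEffect_eq_runFlow N ρ).trans (runFlow_sub (postMat N) (preMat N) ρ)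

theorem runEffect_append (N : UDPN P T V) (ρ τ : List (Step T V)) :
    runEffect N (ρ ++ τ) = runEffect N ρ + runEffect N τ := by
  simp only [runEffect_eq_runFlow, runFlow_append]

theorem runEffect_scaleRun (N : UDPN P T V) (r : ℚ) (ρ : List (Step T V)) :
    runEffect N (scaleRun r ρ) = r • runEffect N ρ := by
  simp only [runEffect_eq_runFlow, runFlow_scaleRun]

theorem runFireable_append {pos : Bool} {N : UDPN P T V} {m : P → ℕ → ℚ}
    {ρ τ : List (Step T V)} :
    runFireable pos N m (ρ ++ τ) ↔
      runFireable pos N m ρ ∧ runFireable pos N (m + runEffect N ρ) τ := by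
  induction ρ generalizing m with
  | nil => simp [runFireable, runEffect_eq_runFlow]
  | cons s ρ ih =>
    have hshift : m + runEffect N (s :: ρ) = m + stepEffect N s + runEffect N ρ :=
      (add_assoc ..).symm
    rw [hshift, List.cons_append, runFireable, ih, ← and_assoc]
    rfl

theorem Reach.refl (pos : Bool) (N : UDPN P T V) (m : P → ℕ → ℚ) : Reach pos N m m :=
  ⟨[], List.forall_mem_nil _, trivial, by simp [runEffect]⟩

theorem Reach.trans {pos : Bool} {N : UDPN P T V} {m₁ m₂ m₃ : P → ℕ → ℚ}
    (h₁ : Reach pos N m₁ m₂) (h₂ : Reach pos N m₂ m₃) : Reach pos N m₁ m₃ := by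
  obtain ⟨ρ, hρ, hρf, rfl⟩ := h₁
  obtain ⟨τ, hτ, hτf, rfl⟩ := h₂
  refine ⟨ρ ++ τ, hρ.append hτ, runFireable_append.2 ⟨hρf, hτf⟩, ?_⟩
  rw [runEffect_append]
  exact add_assoc m₁ (runEffect N ρ) (runEffect N τ)

theorem runFireable_of_runFlow_le {N : UDPN P T V} {ρ : List (Step T V)} (hρ : IsRun ρ)
    {m : P → ℕ → ℚ} (hm : FinCols m) (hle : runFlow (preMat N) ρ ≤ m) :
    runFireable true N m ρ := by
  induction ρ generalizing m with
  | nil => trivial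
  | cons s ρ ih =>
    obtain ⟨hs, hρ⟩ := List.forall_mem_cons.1 hρ
    rw [runFlow_cons] at hle
    have hstep : stepFlow (preMat N) s ≤ m :=
      (le_add_of_nonneg_right (runFlow_nonneg (preMat_nonneg N) hρ)).trans hle
    have hrest : runFlow (preMat N) ρ ≤ m + stepEffect N s :=
      calc runFlow (preMat N) ρ
        _ ≤ m - stepFlow (preMat N) s := le_sub_iff_add_le'.2 hle
        _ ≤ m - stepFlow (preMat N) s + stepFlow (postMat N) s :=
          le_add_of_nonneg_right (stepFlow_nonneg (postMat_nonneg N) hs)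
        _ = m + stepEffect N s := by rw [stepEffect_eq_sub]; abel
    exact ⟨⟨hm.sub (finCols_stepFlow _ s), fun _ => sub_nonneg.2 hstep⟩,
      ih hρ (hm.add (finCols_stepFlow (delta N) s)) hrest⟩

theorem reach_of_runFlow_le {N : UDPN P T V} {ρ : List (Step T V)} (hρ : IsRun ρ)
    {m : P → ℕ → ℚ} (hm : FinCols m) (hle : runFlow (preMat N) ρ ≤ m) :
    Reach true N m (m + runEffect N ρ) :=
  ⟨ρ, hρ, runFireable_of_runFlow_le hρ hm hle, rfl⟩

theorem reach_of_forall_runFlow_div_le {N : UDPN P T V} {σ : List (Step T V)} (hσ : IsRun σ)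
    {m : P → ℕ → ℚ} (hm : FinCols m) {n : ℕ} (hn : n ≠ 0)
    (hle : ∀ k < n, ∀ p α,
      runFlow (preMat N) σ p α / n ≤ m p α + k / n * runEffect N σ p α) :
    Reach true N m (m + runEffect N σ) := by
  have hfraction : ∀ k ≤ n, Reach true N m (m + (k / n : ℚ) • runEffect N σ) := by
    intro k
    induction k with
    | zero => simpa using Reach.refl true N m
    | succ k ih =>
      intro hk
      have hnext : m + ((k + 1 : ℕ) / n : ℚ) • runEffect N σ =
          m + (k / n : ℚ) • runEffect N σ + runEffect N (scaleRun (n : ℚ)⁻¹ σ) := by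
        rw [runEffect_scaleRun, add_assoc, ← add_smul, Nat.cast_succ, add_div, one_div]
      rw [hnext]
      refine (ih (Nat.le_of_succ_le hk)).trans (reach_of_runFlow_le (hσ.scaleRun (by positivity))
        (hm.add (.smul ?_ _)) ?_)
      · exact runEffect_eq_runFlow N σ ▸ finCols_runFlow _ σ
      · rw [runFlow_scaleRun]
        exact fun p α => (inv_mul_eq_div _ _).trans_le (hle k hk p α)
  simpa [hn] using hfraction n le_rfl

theorem eventually_runFlow_div_le {N : UDPN P T V} {σ : List (Step T V)} {m : P → ℕ → ℚ}
    {p : P} {α : ℕ} (hm : 0 < m p α) (hm' : 0 ≤ m p α + runEffect N σ p α)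
    (hpost : (p, α) ∈ postSet N σ → 0 < m p α + runEffect N σ p α) :
    ∀ᶠ n : ℕ in Filter.atTop, ∀ k < n,
      runFlow (preMat N) σ p α / n ≤ m p α + k / n * runEffect N σ p α := by
  rcases hm'.eq_or_lt with hzero | hpos
  · have hproduced : runFlow (postMat N) σ p α = 0 := by
      by_contra hne
      exact (hpost (mem_postSet_of_runFlow_ne_zero hne)).ne hzero
    have heffect : runEffect N σ p α = -m p α := by linarith
    have hconsumed : runFlow (preMat N) σ p α = m p α := by
      simpa [runEffect_eq_sub, hproduced] using heffect
    rw [heffect, hconsumed]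
    exact .of_forall fun n k hkn => div_natCast_le_add_mul_neg hm.le hkn
  · filter_upwards [eventually_div_natCast_le (runFlow (preMat N) σ p α) (lt_min hm hpos)]
      with n hn k hkn
    exact hn.trans (min_le_add_natCast_div_mul hkn.le)

theorem reach_of_pos_on_preSet_of_pos_on_postSet [Finite P] {N : UDPN P T V}
    {σ : List (Step T V)} (hσ : IsRun σ) {m : P → ℕ → ℚ} (hm : IsMarking true m)
    (hm' : 0 ≤ m + runEffect N σ) (hpre : ∀ pa ∈ preSet N σ, 0 < m pa.1 pa.2)
    (hpost : ∀ pa ∈ postSet N σ, 0 < (m + runEffect N σ) pa.1 pa.2) :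
    Reach true N m (m + runEffect N σ) := by
  have hlarge : ∀ᶠ n : ℕ in Filter.atTop, ∀ pa ∈ preSet N σ, ∀ k < n,
      runFlow (preMat N) σ pa.1 pa.2 / n ≤ m pa.1 pa.2 + k / n * runEffect N σ pa.1 pa.2 :=
    (finite_preSet N σ).eventually_all.2 fun pa hpa =>
      eventually_runFlow_div_le (hpre pa hpa) (hm' pa.1 pa.2) (hpost pa)
  obtain ⟨n, hn, hn₀⟩ := (hlarge.and (Filter.eventually_ne_atTop 0)).exists
  refine reach_of_forall_runFlow_div_le hσ hm.1 hn₀ fun k hk p α => ?_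
  by_cases hconsumed : runFlow (preMat N) σ p α = 0
  · rw [hconsumed, zero_div]
    exact (le_min (hm.2 rfl p α) (hm' p α)).trans (min_le_add_natCast_div_mul hk.le)
  · exact hn (p, α) (mem_preSet_of_runFlow_ne_zero hconsumed) k hk

theorem qplus_reach_characterization_general [Finite P]
    (N : UDPN P T V) (i f : P → ℕ → ℚ) (hi : IsMarking true i) :
    Reach true N i f ↔
      ∃ (i' f' : P → ℕ → ℚ) (σ' : List (Step T V)),
        IsMarking true i' ∧ IsMarking true f' ∧ IsRun σ' ∧
        Reach true N i i' ∧
        Reaches false N i' σ' f' ∧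
        Reach true N f' f ∧
        (∀ pa ∈ preSet N σ', 0 < i' pa.1 pa.2) ∧
        (∀ pa ∈ postSet N σ', 0 < f' pa.1 pa.2) := by
  constructor
  · intro h
    exact ⟨i, i, [], hi, hi, List.forall_mem_nil _, Reach.refl true N i,
      ⟨trivial, by simp [runEffect]⟩, h, by simp [preSet], by simp [postSet]⟩
  · rintro ⟨i', f', σ', hi', hf', hσ', hii', ⟨-, rfl⟩, hf'f, hpre, hpost⟩
    exact (hii'.trans (reach_of_pos_on_preSet_of_pos_on_postSet hσ' hi' (hf'.2 rfl)
      hpre hpost)).trans hf'f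

end Runs

/-- Characterization of ℚ⁺-reachability: `f` is ℚ⁺-reachable
from `i` iff there are ℚ⁺-markings `i'`, `f'` and a ℚ-run `σ'` with (1) `i'`
ℚ⁺-reachable from `i`, (2) `i' →σ'_ℚ f'`, (3) `f` ℚ⁺-reachable from `f'`,
(4) `i'` positive on `Pre(σ')`, (5) `f'` positive on `Post(σ')`. -/
theorem qplus_reach_characterization
    (N : UDPN P T V) (i f : P → ℕ → ℚ)
    (hi : IsMarking true i) (hf : IsMarking true f) :
    Reach true N i f ↔
      ∃ (i' f' : P → ℕ → ℚ) (σ' : List (Step T V)),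
        IsMarking true i' ∧ IsMarking true f' ∧ IsRun σ' ∧
        Reach true N i i' ∧
        Reaches false N i' σ' f' ∧
        Reach true N f' f ∧
        (∀ pa ∈ preSet N σ', 0 < i' pa.1 pa.2) ∧
        (∀ pa ∈ postSet N σ', 0 < f' pa.1 pa.2) :=
  qplus_reach_characterization_general N i f hi
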